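/- arXiv:1807.08324 — 10 statements merged into one kernel-verified Lean document; each statement's English description precedes it below -/
import Mathlib

section
/- Let (g, [·,·], α) be a Hom-Lie algebra over a field K with α surjective, and let A and B be ideals of g. Let S = [A,B] be the linear span of all brackets [a,b] with a ∈ A, b ∈ B, and assume α(S) ⊆ S. Then S is an ideal of g; in particular [g, S] ⊆ S. -/
/-- The span of brackets of elements of `A` with elements of `C`. -/
def homLieBracketSpan {K g : Type*} [Field K] [AddCommGroup g] [Module K g]
    (B : g →ₗ[K] g →ₗ[K] g) (A C : Submodule K g) : Submodule K g :=
  Submodule.span K {z | ∃ a ∈ A, ∃ c ∈ C, z = B a c}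

/-- In a Hom-Lie algebra with surjective structure map, the span `S = [A,B]` of
brackets of two ideals, when stable under `α`, is an ideal. -/
theorem bracket_of_ideals_is_ideal {K g : Type*} [Field K] [AddCommGroup g] [Module K g]
    (B : g →ₗ[K] g →ₗ[K] g) (α : g →ₗ[K] g)
    (hskew : ∀ x y, B x y = - B y x)
    (hjac : ∀ x y z, B (α x) (B y z) + B (α y) (B z x) + B (α z) (B x y) = 0)
    (hsurj : Function.Surjective α)
    (A C : Submodule K g)
    (hA1 : ∀ x : g, ∀ a ∈ A, B x a ∈ A) (hA2 : ∀ a ∈ A, α a ∈ A)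
    (hC1 : ∀ x : g, ∀ c ∈ C, B x c ∈ C) (hC2 : ∀ c ∈ C, α c ∈ C)
    (hS : ∀ s ∈ homLieBracketSpan B A C, α s ∈ homLieBracketSpan B A C) :
    (∀ s ∈ homLieBracketSpan B A C, α s ∈ homLieBracketSpan B A C) ∧
    (∀ x : g, ∀ s ∈ homLieBracketSpan B A C, B x s ∈ homLieBracketSpan B A C) := by
  refine ⟨hS, ?_⟩
  intro x s hs
  obtain ⟨y, rfl⟩ := hsurj x
  unfold homLieBracketSpan at hs ⊢
  induction hs using Submodule.span_induction with
  | mem z hz =>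
    obtain ⟨a, ha, c, hc, rfl⟩ := hz
    have key : B (α y) (B a c) = B (α a) (B y c) + B (B y a) (α c) := by
      have h := hjac y a c
      rw [hskew c y, hskew (α c) (B y a), map_neg] at h
      rw [← sub_eq_zero, ← h]
      abel
    rw [key]
    exact Submodule.add_mem _
      (Submodule.subset_span ⟨α a, hA2 a ha, B y c, hC1 y c hc, rfl⟩)
      (Submodule.subset_span ⟨B y a, hA1 y a ha, α c, hC2 c hc, rfl⟩)
  | zero => rw [map_zero]; exact Submodule.zero_mem _
  | add u v _ _ hu hv => rw [map_add]; exact Submodule.add_mem _ hu hv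
  | smul k u _ hu => rw [map_smul]; exact Submodule.smul_mem _ k hu
end

section
/- Let (g, [·,·], α) be a multiplicative Hom-Lie algebra over a field K with α surjective, and let I be an ideal of g. Then for every r ≥ 0 the term D^r(I) of the derived series of I (D^0(I) = I, D^{r+1}(I) = [D^r(I), D^r(I)]) is an ideal of g; that is, [g, D^r(I)] ⊆ D^r(I) and α(D^r(I)) ⊆ D^r(I). -/
/-- The derived series of an ideal `I` : `D^0(I) = I`, `D^{r+1}(I) = [D^r(I), D^r(I)]`. -/
def homLieDerivedSeries {K g : Type*} [Field K] [AddCommGroup g] [Module K g]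
    (B : g →ₗ[K] g →ₗ[K] g) (I : Submodule K g) : ℕ → Submodule K g
  | 0 => I
  | r + 1 => homLieBracketSpan B (homLieDerivedSeries B I r) (homLieDerivedSeries B I r)

/-- In a multiplicative Hom-Lie algebra with surjective structure map, each
term of the derived series of an ideal is an ideal. -/
theorem derivedSeries_is_ideal {K g : Type*} [Field K] [AddCommGroup g] [Module K g]
    (B : g →ₗ[K] g →ₗ[K] g) (α : g →ₗ[K] g)
    (hskew : ∀ x y, B x y = - B y x)
    (hjac : ∀ x y z, B (α x) (B y z) + B (α y) (B z x) + B (α z) (B x y) = 0)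
    (hmul : ∀ x y, α (B x y) = B (α x) (α y))
    (hsurj : Function.Surjective α)
    (I : Submodule K g)
    (hI1 : ∀ x : g, ∀ a ∈ I, B x a ∈ I) (hI2 : ∀ a ∈ I, α a ∈ I) :
    ∀ r : ℕ,
      (∀ x : g, ∀ y ∈ homLieDerivedSeries B I r, B x y ∈ homLieDerivedSeries B I r) ∧
      (∀ y ∈ homLieDerivedSeries B I r, α y ∈ homLieDerivedSeries B I r) := by
  intro r
  induction r with
  | zero => exact ⟨hI1, hI2⟩
  | succ r ih =>
    obtain ⟨h1, h2⟩ := ih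
    have hmem : ∀ a ∈ homLieDerivedSeries B I r, ∀ c ∈ homLieDerivedSeries B I r,
        B a c ∈ homLieDerivedSeries B I (r + 1) := fun a ha c hc =>
      Submodule.subset_span ⟨a, ha, c, hc, rfl⟩
    constructor
    · intro x y hy
      obtain ⟨x, rfl⟩ := hsurj x
      have hle : homLieDerivedSeries B I (r + 1) ≤
          (homLieDerivedSeries B I (r + 1)).comap (B (α x)) := by
        refine Submodule.span_le.mpr ?_
        rintro _ ⟨a, ha, c, hc, rfl⟩
        change B (α x) (B a c) ∈ homLieDerivedSeries B I (r + 1)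
        have hcx : B c x ∈ homLieDerivedSeries B I r := by
          rw [hskew]
          exact neg_mem (h1 x c hc)
        have e : B (α x) (B a c) = -(B (α a) (B c x) + B (α c) (B x a)) := by
          rw [eq_neg_iff_add_eq_zero, ← add_assoc]
          exact hjac x a c
        rw [e]
        exact neg_mem (add_mem (hmem _ (h2 a ha) _ hcx) (hmem _ (h2 c hc) _ (h1 x a ha)))
      exact hle hy
    · intro y hy
      have hle : homLieDerivedSeries B I (r + 1) ≤
          (homLieDerivedSeries B I (r + 1)).comap α := by
        refine Submodule.span_le.mpr ?_
        rintro _ ⟨a, ha, c, hc, rfl⟩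
        change α (B a c) ∈ homLieDerivedSeries B I (r + 1)
        rw [hmul]
        exact hmem _ (h2 a ha) _ (h2 c hc)
      exact hle hy
end

section
/- Let (g, [·,·], α) be a multiplicative Hom-Lie algebra over a field K with α surjective, and let I be an ideal of g. Then for every r ≥ 0 the term C^r(I) of the central descending series of I (C^0(I) = I, C^{r+1}(I) = [I, C^r(I)]) is an ideal of g; that is, [g, C^r(I)] ⊆ C^r(I) and α(C^r(I)) ⊆ C^r(I). -/
/-- The central descending series of an ideal `I` :
`C^0(I) = I`, `C^{r+1}(I) = [I, C^r(I)]`. -/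
def homLieCentralSeriesOf {K g : Type*} [Field K] [AddCommGroup g] [Module K g]
    (B : g →ₗ[K] g →ₗ[K] g) (I : Submodule K g) : ℕ → Submodule K g
  | 0 => I
  | r + 1 => homLieBracketSpan B I (homLieCentralSeriesOf B I r)

/-- In a multiplicative Hom-Lie algebra with surjective structure map, each
term of the central descending series of an ideal is an ideal. -/
theorem centralSeries_is_ideal {K g : Type*} [Field K] [AddCommGroup g] [Module K g]
    (B : g →ₗ[K] g →ₗ[K] g) (α : g →ₗ[K] g)
    (hskew : ∀ x y, B x y = - B y x)
    (hjac : ∀ x y z, B (α x) (B y z) + B (α y) (B z x) + B (α z) (B x y) = 0)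
    (hmul : ∀ x y, α (B x y) = B (α x) (α y))
    (hsurj : Function.Surjective α)
    (I : Submodule K g)
    (hI1 : ∀ x : g, ∀ a ∈ I, B x a ∈ I) (hI2 : ∀ a ∈ I, α a ∈ I) :
    ∀ r : ℕ,
      (∀ x : g, ∀ y ∈ homLieCentralSeriesOf B I r, B x y ∈ homLieCentralSeriesOf B I r) ∧
      (∀ y ∈ homLieCentralSeriesOf B I r, α y ∈ homLieCentralSeriesOf B I r) := by
  intro r
  induction r with
  | zero => exact ⟨hI1, hI2⟩
  | succ r ih =>
    obtain ⟨ih1, ih2⟩ := ih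
    have key : ∀ a ∈ I, ∀ c ∈ homLieCentralSeriesOf B I r,
        B a c ∈ homLieCentralSeriesOf B I (r + 1) := fun a ha c hc =>
      Submodule.subset_span ⟨a, ha, c, hc, rfl⟩
    constructor
    · intro x y hy
      obtain ⟨u, rfl⟩ := hsurj x
      have hle : homLieCentralSeriesOf B I (r + 1) ≤
          (homLieCentralSeriesOf B I (r + 1)).comap (B (α u)) := by
        refine Submodule.span_le.mpr ?_
        rintro z ⟨a, ha, c, hc, rfl⟩
        change B (α u) (B a c) ∈ homLieCentralSeriesOf B I (r + 1)
        have h1 := key (α a) (hI2 a ha) (B u c) (ih1 u c hc)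
        have h2 := key (B u a) (hI1 u a ha) (α c) (ih2 c hc)
        have h := hjac u a c
        rw [hskew c u, map_neg, hskew (α c) (B u a)] at h
        have e : B (α u) (B a c) = B (α a) (B u c) + B (B u a) (α c) := by
          rw [← sub_eq_zero, ← h]
          abel
        rw [e]
        exact Submodule.add_mem _ h1 h2
      exact hle hy
    · intro y hy
      have hle : homLieCentralSeriesOf B I (r + 1) ≤
          (homLieCentralSeriesOf B I (r + 1)).comap α := by
        refine Submodule.span_le.mpr ?_
        rintro z ⟨a, ha, c, hc, rfl⟩
        change α (B a c) ∈ homLieCentralSeriesOf B I (r + 1)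
        rw [hmul]
        exact key _ (hI2 a ha) _ (ih2 c hc)
      exact hle hy
end

section
/- Let (g, [·,·], α) be a Hom-Lie algebra over a field K and let β : g → g be a weak morphism, i.e. a linear map with β([x,y]) = [β(x), β(y)] for all x,y. Then g_β := (g, β ∘ [·,·], β ∘ α) is a Hom-Lie algebra: the bracket (x,y) ↦ β([x,y]) is bilinear and skew-symmetric and satisfies the Hom-Jacobi identity with respect to the linear map β ∘ α. -/
/-- Twisting a Hom-Lie algebra `(g,[·,·],α)` along a weak morphism `β` yields a
Hom-Lie algebra `(g, β∘[·,·], β∘α)`. -/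
theorem weak_morphism_twist {K g : Type*} [Field K] [AddCommGroup g] [Module K g]
    (B : g →ₗ[K] g →ₗ[K] g) (α : g →ₗ[K] g)
    (hskew : ∀ x y, B x y = - B y x)
    (hjac : ∀ x y z, B (α x) (B y z) + B (α y) (B z x) + B (α z) (B x y) = 0)
    (β : g →ₗ[K] g)
    (hβ : ∀ x y, β (B x y) = B (β x) (β y)) :
    let B' : g → g → g := fun x y => β (B x y)
    let γ : g → g := fun x => β (α x)
    (∀ (a : K) (x x' y : g), B' (a • x + x') y = a • B' x y + B' x' y) ∧
    (∀ (a : K) (x y y' : g), B' x (a • y + y') = a • B' x y + B' x y') ∧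
    (∀ x y, B' x y = - B' y x) ∧
    (∀ x y z, B' (γ x) (B' y z) + B' (γ y) (B' z x) + B' (γ z) (B' x y) = 0) := by
  intro B' γ
  refine ⟨fun a x x' y => ?_, fun a x y y' => ?_, fun x y => ?_, fun x y z => ?_⟩
  · simp only [B', map_add, map_smul, LinearMap.add_apply, LinearMap.smul_apply]
  · simp only [B', map_add, map_smul]
  · change β (B x y) = -β (B y x)
    rw [hskew x y, map_neg]
  · change β (B (β (α x)) (β (B y z))) + β (B (β (α y)) (β (B z x)))
      + β (B (β (α z)) (β (B x y))) = 0
    rw [← hβ (α x), ← hβ (α y), ← hβ (α z), ← map_add, ← map_add, ← map_add, ← map_add,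
      hjac, map_zero, map_zero]
end

section
/- Let (g, [·,·], α) be a multiplicative Hom-Lie algebra over a field K and let n ≥ 0. Then the n-th derived Hom-Lie algebra g_(n) := (g, [·,·]^(n), α^(n+1)), where [x,y]^(n) := α^n([x,y]) and α^(n+1) is the (n+1)-fold composite of α, is again a multiplicative Hom-Lie algebra: the bracket [·,·]^(n) is bilinear, skew-symmetric, satisfies the Hom-Jacobi identity with respect to α^(n+1), and α^(n+1)([x,y]^(n)) = [α^(n+1)(x), α^(n+1)(y)]^(n). -/
/-- The `n`-th derived Hom-Lie algebra `(g, αⁿ∘[·,·], α^{n+1})` of a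
multiplicative Hom-Lie algebra is again a multiplicative Hom-Lie algebra. -/
theorem nth_derived_homLie {K g : Type*} [Field K] [AddCommGroup g] [Module K g]
    (B : g →ₗ[K] g →ₗ[K] g) (α : g →ₗ[K] g)
    (hskew : ∀ x y, B x y = - B y x)
    (hjac : ∀ x y z, B (α x) (B y z) + B (α y) (B z x) + B (α z) (B x y) = 0)
    (hmul : ∀ x y, α (B x y) = B (α x) (α y))
    (n : ℕ) :
    let Bn : g → g → g := fun x y => (α ^ n : Module.End K g) (B x y)
    let γ : g → g := fun x => (α ^ (n + 1) : Module.End K g) x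
    (∀ (a : K) (x x' y : g), Bn (a • x + x') y = a • Bn x y + Bn x' y) ∧
    (∀ (a : K) (x y y' : g), Bn x (a • y + y') = a • Bn x y + Bn x y') ∧
    (∀ x y, Bn x y = - Bn y x) ∧
    (∀ x y z, Bn (γ x) (Bn y z) + Bn (γ y) (Bn z x) + Bn (γ z) (Bn x y) = 0) ∧
    (∀ x y, γ (Bn x y) = Bn (γ x) (γ y)) := by
  have key : ∀ (m : ℕ) (x y : g), (α ^ m : Module.End K g) (B x y)
      = B ((α ^ m : Module.End K g) x) ((α ^ m : Module.End K g) y) := by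
    intro m
    induction m with
    | zero => intro x y; simp
    | succ k ih =>
      intro x y
      simp only [pow_succ, Module.End.mul_apply]
      rw [hmul, ih]
  have comm : ∀ x : g, (α ^ (n + 1) : Module.End K g) x = (α ^ n : Module.End K g) (α x) := by
    intro x
    rw [pow_succ, Module.End.mul_apply]
  intro Bn γ
  refine ⟨?_, ?_, ?_, ?_, ?_⟩
  · intro a x x' y
    simp [Bn]
  · intro a x y y'
    simp [Bn]
  · intro x y
    simp only [Bn]
    rw [hskew x y, map_neg]
  · intro x y z
    simp only [Bn, γ]
    rw [comm x, comm y, comm z, ← key n (α x), ← key n (α y), ← key n (α z),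
      ← map_add, ← map_add, ← map_add, ← map_add, hjac, map_zero, map_zero]
  · intro x y
    simp only [Bn, γ]
    rw [← key (n + 1) x y]
    generalize B x y = w
    rw [← Module.End.mul_apply, ← Module.End.mul_apply,
      ← pow_add, ← pow_add, Nat.add_comm]
end

section
/- Let (g, [·,·], α) be a finite-dimensional multiplicative Hom-Lie algebra of dimension n over a field K, where α is bijective and α([x,y]) = [α(x),α(y)] for all x,y. Define [x,y]' := α^{-1}([x,y]). Then [·,·]' satisfies the Jacobi identity [x,[y,z]']' + [y,[z,x]']' + [z,[x,y]']' = 0 (so (g, [·,·]') is a Lie algebra), and its descending central series coincides with that of [·,·]; in particular, if (g, [·,·], α) is filiform then (g, [·,·]') is a filiform Lie algebra. -/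
/-- The descending central series of a bracket. -/
def homLieLCS {K g : Type*} [Field K] [AddCommGroup g] [Module K g]
    (B : g →ₗ[K] g →ₗ[K] g) : ℕ → Submodule K g
  | 0 => ⊤
  | r + 1 => homLieBracketSpan B ⊤ (homLieLCS B r)

/-- Untwisting a multiplicative Hom-Lie algebra with bijective structure map by
`[x,y]' := α⁻¹([x,y])` yields a Lie algebra with the same descending central
series; in particular, filiform Hom-Lie algebras untwist to filiform Lie
algebras. -/
theorem untwist_filiform {K g : Type*} [Field K] [AddCommGroup g] [Module K g]
    [FiniteDimensional K g] (n : ℕ) (hn : Module.finrank K g = n)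
    (B : g →ₗ[K] g →ₗ[K] g) (α : g ≃ₗ[K] g)
    (hskew : ∀ x y, B x y = - B y x)
    (hjac : ∀ x y z, B (α x) (B y z) + B (α y) (B z x) + B (α z) (B x y) = 0)
    (hmul : ∀ x y, α (B x y) = B (α x) (α y)) :
    let B' : g →ₗ[K] g →ₗ[K] g := B.compr₂ α.symm.toLinearMap
    (∀ x y z, B' x (B' y z) + B' y (B' z x) + B' z (B' x y) = 0) ∧
    (∀ p : ℕ, homLieLCS B' p = homLieLCS B p) ∧
    ((∀ k : ℕ, 1 ≤ k → k ≤ n - 1 →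
        Module.finrank K (homLieLCS B k) = n - k - 1) →
      ∀ k : ℕ, 1 ≤ k → k ≤ n - 1 →
        Module.finrank K (homLieLCS B' k) = n - k - 1) := by
  intro B'
  have hmul' : ∀ x y, α.symm (B x y) = B (α.symm x) (α.symm y) := fun x y => by
    rw [LinearEquiv.symm_apply_eq, hmul]; simp
  have hB' : ∀ x y, B' x y = α.symm (B x y) := fun x y => rfl
  -- the central series is stable under any equivariant linear map
  have stab : ∀ f : g →ₗ[K] g, (∀ x y, f (B x y) = B (f x) (f y)) →
      ∀ p, ∀ x ∈ homLieLCS B p, f x ∈ homLieLCS B p := by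
    intro f hf p
    induction p with
    | zero => intro x _; exact Submodule.mem_top
    | succ p ih =>
      change homLieBracketSpan B ⊤ (homLieLCS B p) ≤
        (homLieBracketSpan B ⊤ (homLieLCS B p)).comap f
      refine Submodule.span_le.2 ?_
      rintro _ ⟨a, -, c, hc, rfl⟩
      exact Submodule.subset_span ⟨f a, Submodule.mem_top, f c, ih c hc, hf a c⟩
  have hlcs : ∀ p : ℕ, homLieLCS B' p = homLieLCS B p := by
    intro p
    induction p with
    | zero => rfl
    | succ p ih =>
      apply le_antisymm
      · refine Submodule.span_le.2 ?_
        rintro _ ⟨a, -, c, hc, rfl⟩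
        rw [ih] at hc
        exact stab α.symm.toLinearMap hmul' (p + 1) (B a c)
          (Submodule.subset_span ⟨a, Submodule.mem_top, c, hc, rfl⟩)
      · refine Submodule.span_le.2 ?_
        rintro _ ⟨a, -, c, hc, rfl⟩
        refine Submodule.subset_span ⟨α a, Submodule.mem_top, α c, ?_, ?_⟩
        · rw [ih]
          exact stab α.toLinearMap hmul p c hc
        · rw [hB', ← hmul, LinearEquiv.symm_apply_apply]
  refine ⟨fun x y z => ?_, hlcs, fun h k h1 h2 => ?_⟩
  · have key : ∀ x y z, B' x (B' y z) = α.symm (α.symm (B (α x) (B y z))) := by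
      intro x y z
      rw [hB', hB', hmul' (α x), LinearEquiv.symm_apply_apply]
    rw [key, key, key, ← map_add, ← map_add, ← map_add, ← map_add, hjac, map_zero, map_zero]
  · rw [hlcs]
    exact h k h1 h2
end

section
/- Let K be a field of characteristic zero and q ∈ K. On the 3-dimensional K-vector space with basis x₁, x₂, x₃, define the skew-symmetric bilinear bracket by [x₁,x₂] = −2q x₂, [x₁,x₃] = 2x₃, [x₂,x₃] = −(1/2)(1+q) x₁ (other brackets determined by skew-symmetry, [xᵢ,xᵢ] = 0), and the linear map α by α(x₁) = q x₁, α(x₂) = q² x₂, α(x₃) = q x₃. Then (K³, [·,·], α) is a Hom-Lie algebra: the Hom-Jacobi identity [α(x),[y,z]] + [α(y),[z,x]] + [α(z),[x,y]] = 0 holds for all x, y, z. -/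
/-- The q-deformation of sl₂(K) is a Hom-Lie algebra. -/
theorem q_deformed_sl2_homLie {K : Type*} [Field K] [CharZero K] (q : K) :
    let br : (Fin 3 → K) → (Fin 3 → K) → (Fin 3 → K) := fun u v =>
      ![-(1/2) * (1 + q) * (u 1 * v 2 - u 2 * v 1),
        -2 * q * (u 0 * v 1 - u 1 * v 0),
        2 * (u 0 * v 2 - u 2 * v 0)]
    let α : (Fin 3 → K) → (Fin 3 → K) := fun u =>
      ![q * u 0, q ^ 2 * u 1, q * u 2]
    ∀ x y z : Fin 3 → K,
      br (α x) (br y z) + br (α y) (br z x) + br (α z) (br x y) = 0 := by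
  intro br α x y z
  ext i
  fin_cases i <;> simp [br, α] <;> ring
end

section
/- Let K be a field of characteristic zero and a, b, c, d ∈ K. On the 3-dimensional K-vector space with basis x₁, x₂, x₃, define the skew-symmetric bilinear bracket by [x₁,x₂] = a x₁ + b x₃, [x₁,x₃] = c x₂, [x₂,x₃] = d x₁ + 2a x₃ (other brackets determined by skew-symmetry), and the linear map α by α(x₁) = x₁, α(x₂) = 2x₂, α(x₃) = 2x₃. Then (K³, [·,·], α) is a Hom-Lie algebra (the Hom-Jacobi identity holds for all triples), and the Jacobi cyclic sum satisfies [x₁,[x₂,x₃]] + [x₃,[x₁,x₂]] + [x₂,[x₃,x₁]] = a c x₂; in particular, the bracket satisfies the Jacobi identity if and only if a c = 0. -/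
/-- Example of a 3-dimensional Hom-Lie algebra which fails the Jacobi identity
exactly when `a*c ≠ 0`. -/
theorem three_dim_homLie_example {K : Type*} [Field K] [CharZero K] (a b c d : K) :
    let br : (Fin 3 → K) → (Fin 3 → K) → (Fin 3 → K) := fun u v =>
      ![a * (u 0 * v 1 - u 1 * v 0) + d * (u 1 * v 2 - u 2 * v 1),
        c * (u 0 * v 2 - u 2 * v 0),
        b * (u 0 * v 1 - u 1 * v 0) + 2 * a * (u 1 * v 2 - u 2 * v 1)]
    let α : (Fin 3 → K) → (Fin 3 → K) := fun u => ![u 0, 2 * u 1, 2 * u 2]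
    (∀ x y z : Fin 3 → K,
      br (α x) (br y z) + br (α y) (br z x) + br (α z) (br x y) = 0) ∧
    (br ![1,0,0] (br ![0,1,0] ![0,0,1]) + br ![0,0,1] (br ![1,0,0] ![0,1,0])
      + br ![0,1,0] (br ![0,0,1] ![1,0,0]) = (a * c) • ![(0:K),1,0]) ∧
    ((∀ x y z : Fin 3 → K,
        br x (br y z) + br y (br z x) + br z (br x y) = 0) ↔ a * c = 0) := by
  intro br α
  have key : ∀ x y z : Fin 3 → K,
      br x (br y z) + br y (br z x) + br z (br x y) =
        ![0, a * c * (x 0 * (y 1 * z 2 - y 2 * z 1) - x 1 * (y 0 * z 2 - y 2 * z 0)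
          + x 2 * (y 0 * z 1 - y 1 * z 0)), 0] := by
    intro x y z
    ext i
    fin_cases i <;> simp [br] <;> ring
  refine ⟨?_, ?_, ?_, ?_⟩
  · intro x y z
    ext i
    fin_cases i <;> simp [br, α] <;> ring
  · ext i
    fin_cases i <;> simp [br]
    ring
  · intro h
    have h1 := (key ![1,0,0] ![0,1,0] ![0,0,1]).symm.trans (h _ _ _)
    simpa using congrFun h1 1
  · intro h x y z
    rw [key, h]
    ext i
    fin_cases i <;> simp
end

section
/- Let K be a field and a₁₁, a₁₂, a₂₁, a₂₂, a₃₁, a₃₂ ∈ K. On the 3-dimensional K-vector space with basis x₁, x₂, x₃, define the skew-symmetric bilinear bracket by [x₁,x₂] = (a₁₁a₂₂ − a₁₂a₂₁) x₃ and [x₁,x₃] = [x₂,x₃] = 0 (other brackets by skew-symmetry), and define the linear map α by α(x₁) = a₁₁x₁ + a₂₁x₂ + a₃₁x₃, α(x₂) = a₁₂x₁ + a₂₂x₂ + a₃₂x₃, α(x₃) = (a₁₁a₂₂ − a₁₂a₂₁) x₃. Then (K³, [·,·], α) is a multiplicative Hom-Lie algebra: the Hom-Jacobi identity holds for all triples and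 α([x,y]) = [α(x), α(y)] for all x, y. -/
/-- The twisted Heisenberg algebra is a multiplicative Hom-Lie algebra. -/
theorem twisted_heisenberg_homLie {K : Type*} [Field K]
    (a11 a12 a21 a22 a31 a32 : K) :
    let br : (Fin 3 → K) → (Fin 3 → K) → (Fin 3 → K) := fun u v =>
      ![0, 0, (a11 * a22 - a12 * a21) * (u 0 * v 1 - u 1 * v 0)]
    let α : (Fin 3 → K) → (Fin 3 → K) := fun u =>
      ![a11 * u 0 + a12 * u 1,
        a21 * u 0 + a22 * u 1,
        a31 * u 0 + a32 * u 1 + (a11 * a22 - a12 * a21) * u 2]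
    (∀ x y z : Fin 3 → K,
      br (α x) (br y z) + br (α y) (br z x) + br (α z) (br x y) = 0) ∧
    (∀ x y : Fin 3 → K, α (br x y) = br (α x) (α y)) := by
  intro br α
  constructor
  · intro x y z
    ext i
    fin_cases i <;> simp [br, α]
  · intro x y
    ext i
    fin_cases i
    · simp [br, α]
    · simp [br, α]
    · simp only [br, α, Fin.reduceFinMk, Matrix.cons_val]
      ring
end

section
/- Let K be a field, n ≥ 2, and let Lₙ be the (n+1)-dimensional K-vector space with basis x₀, x₁, …, xₙ equipped with the skew-symmetric bilinear bracket given by [x₀, xᵢ] = x_{i+1} for 1 ≤ i ≤ n−1 and [xᵢ, xⱼ] = 0 for all i, j ≥ 1 (other brackets determined by skew-symmetry). For arbitrary scalars ρ_{i,0}, ρ_{i,1} ∈ K (1 ≤ i ≤ n), define the linear map α by α(x₀) = Σ_{i=1}^{n} ρ_{i,0} xᵢ, α(x₁) = Σ_{i=1}^{n} ρ_{i,1} xᵢ, and α(x_k) = 0 for 2 ≤ k ≤ n. Then (Lₙ, [·,·], α) is a multiplicative Hom-Lie algebra: the Hom-Jacobi identity holds for all triples and α([x,y]) = [α(x), α(y)]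 for all x, y. -/
/-- The model filiform algebra `Lₙ` with the structure maps of the family
`ρ₀₀ = 0` is a multiplicative Hom-Lie algebra. -/
theorem model_filiform_multiplicative {K : Type*} [Field K] (n : ℕ) (hn : 2 ≤ n)
    (ρ0 ρ1 : Fin (n + 1) → K) :
    let br : (Fin (n + 1) → K) → (Fin (n + 1) → K) → (Fin (n + 1) → K) := fun u v j =>
      if h : 2 ≤ (j : ℕ) then
        u 0 * v ⟨(j : ℕ) - 1, lt_of_le_of_lt (Nat.sub_le _ _) j.isLt⟩
        - u ⟨(j : ℕ) - 1, lt_of_le_of_lt (Nat.sub_le _ _) j.isLt⟩ * v 0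
      else 0
    let α : (Fin (n + 1) → K) → (Fin (n + 1) → K) := fun u j =>
      if 1 ≤ (j : ℕ) then ρ0 j * u 0 + ρ1 j * u 1 else 0
    (∀ x y z : Fin (n + 1) → K,
      br (α x) (br y z) + br (α y) (br z x) + br (α z) (br x y) = 0) ∧
    (∀ x y : Fin (n + 1) → K, α (br x y) = br (α x) (α y)) := by
  intro br α
  have br0 : ∀ u v, br u v 0 = 0 := fun u v => by simp [br]
  have br1 : ∀ u v, br u v 1 = 0 := fun u v => by
    have h1 : ((1 : Fin (n + 1)) : ℕ) = 1 := by
      rw [Fin.val_one']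
      exact Nat.mod_eq_of_lt (by omega)
    have h2 : ¬ 2 ≤ ((1 : Fin (n + 1)) : ℕ) := by omega
    exact dif_neg h2
  have α0 : ∀ u, α u 0 = 0 := fun u => by simp [α]
  have brz : ∀ u v, u 0 = 0 → v 0 = 0 → br u v = 0 := fun u v hu hv => by
    funext j
    simp [br, hu, hv]
  have αz : ∀ u, u 0 = 0 → u 1 = 0 → α u = 0 := fun u h0 h1 => by
    funext j
    simp [α, h0, h1]
  refine ⟨fun x y z => ?_, fun x y => ?_⟩
  · rw [brz _ _ (α0 x) (br0 y z), brz _ _ (α0 y) (br0 z x), brz _ _ (α0 z) (br0 x y)]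
    simp
  · rw [αz _ (br0 x y) (br1 x y), brz _ _ (α0 x) (α0 y)]
end
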